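/- arXiv:2206.04160 — 11 statements merged into one kernel-verified Lean document; each statement's English description precedes it below -/
import Mathlib

section
/- Let 𝒫 ⊆ ℝ^m and 𝒬 ⊆ ℝ^n be nonempty compact convex sets, A ∈ ℝ^{m×n}, and let (p_k)_{k≥0} ⊆ 𝒫 and (q_k)_{k≥0} ⊆ 𝒬 be arbitrary sequences. For K ≥ 1, define the regrets R_{1,K}(p) = Σ_{k=0}^{K-1} ((p_k+p_{k+1})/2)ᵀ A q_k − Σ_{k=0}^{K-1} pᵀ A q_k and R_{2,K}(q) = Σ_{k=0}^{K-1} p_{k+1}ᵀ A q − Σ_{k=0}^{K-1} p_{k+1}ᵀ A ((q_k+q_{k+1})/2), the total regret R_K = max_{(p,q)∈𝒫×𝒬} (R_{1,K}(p) + R_{2,K}(q)), and the average iterates p̄_K = (1/K) Σ_{k=0}^{K-1} p_{k+1}, q̄_K = (1/K) Σ_{k=0}^{K-1} q_k. Then the duality gap of the average iterates satisfies dg(p̄_K, q̄_K) = (1/K) R_K − (1/(2K)) (p₀ᵀ A q₀ − p_Kᵀ A q_K). -/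
open RealInnerProductSpace Matrix

/-- The duality gap `dg(p,q) = max_{q̃∈Q} pᵀ A q̃ − min_{p̃∈P} p̃ᵀ A q`. -/
noncomputable def dualityGap {m n : ℕ} (P : Set (EuclideanSpace ℝ (Fin m)))
    (Q : Set (EuclideanSpace ℝ (Fin n))) (A : Matrix (Fin m) (Fin n) ℝ)
    (p : EuclideanSpace ℝ (Fin m)) (q : EuclideanSpace ℝ (Fin n)) : ℝ :=
  sSup ((fun q' => ⟪p, Matrix.toEuclideanLin A q'⟫) '' Q) -
    sInf ((fun p' => ⟪p', Matrix.toEuclideanLin A q⟫) '' P)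

/-- Regret of the first player after `K` iterations with respect to a static action `p'`. -/
noncomputable def regret1 {m n : ℕ} (A : Matrix (Fin m) (Fin n) ℝ)
    (p : ℕ → EuclideanSpace ℝ (Fin m)) (q : ℕ → EuclideanSpace ℝ (Fin n)) (K : ℕ)
    (p' : EuclideanSpace ℝ (Fin m)) : ℝ :=
  ∑ k ∈ Finset.range K, ⟪(2:ℝ)⁻¹ • (p k + p (k+1)), Matrix.toEuclideanLin A (q k)⟫ -
    ∑ k ∈ Finset.range K, ⟪p', Matrix.toEuclideanLin A (q k)⟫

/-- Regret of the second player after `K` iterations with respect to a static action `q'`. -/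
noncomputable def regret2 {m n : ℕ} (A : Matrix (Fin m) (Fin n) ℝ)
    (p : ℕ → EuclideanSpace ℝ (Fin m)) (q : ℕ → EuclideanSpace ℝ (Fin n)) (K : ℕ)
    (q' : EuclideanSpace ℝ (Fin n)) : ℝ :=
  ∑ k ∈ Finset.range K, ⟪p (k+1), Matrix.toEuclideanLin A q'⟫ -
    ∑ k ∈ Finset.range K, ⟪p (k+1), Matrix.toEuclideanLin A ((2:ℝ)⁻¹ • (q k + q (k+1)))⟫

/-- The total regret `R_K = max_{(p,q)∈P×Q} (R_{1,K}(p) + R_{2,K}(q))`. -/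
noncomputable def totalRegret {m n : ℕ} (P : Set (EuclideanSpace ℝ (Fin m)))
    (Q : Set (EuclideanSpace ℝ (Fin n))) (A : Matrix (Fin m) (Fin n) ℝ)
    (p : ℕ → EuclideanSpace ℝ (Fin m)) (q : ℕ → EuclideanSpace ℝ (Fin n)) (K : ℕ) : ℝ :=
  sSup {r : ℝ | ∃ p' ∈ P, ∃ q' ∈ Q, r = regret1 A p q K p' + regret2 A p q K q'}

/-- **Total regret and duality gap of the average iterates.**
`dg(p̄_K, q̄_K) = (1/K) R_K − (1/(2K)) (p₀ᵀ A q₀ − p_Kᵀ A q_K)`. -/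
theorem dualityGap_avg_eq_totalRegret {m n : ℕ}
    (P : Set (EuclideanSpace ℝ (Fin m))) (Q : Set (EuclideanSpace ℝ (Fin n)))
    (hPne : P.Nonempty) (hPc : IsCompact P) (hPconv : Convex ℝ P)
    (hQne : Q.Nonempty) (hQc : IsCompact Q) (hQconv : Convex ℝ Q)
    (A : Matrix (Fin m) (Fin n) ℝ)
    (p : ℕ → EuclideanSpace ℝ (Fin m)) (q : ℕ → EuclideanSpace ℝ (Fin n))
    (hp : ∀ k, p k ∈ P) (hq : ∀ k, q k ∈ Q)
    (K : ℕ) (hK : 1 ≤ K) :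
    dualityGap P Q A ((K:ℝ)⁻¹ • ∑ k ∈ Finset.range K, p (k+1))
        ((K:ℝ)⁻¹ • ∑ k ∈ Finset.range K, q k) =
      (K:ℝ)⁻¹ * totalRegret P Q A p q K -
        (2 * (K:ℝ))⁻¹ * (⟪p 0, Matrix.toEuclideanLin A (q 0)⟫ -
          ⟪p K, Matrix.toEuclideanLin A (q K)⟫) := by
  have hK0 : (K:ℝ) ≠ 0 := by
    have : (0:ℝ) < K := by exact_mod_cast hK
    exact this.ne'
  have hKpos : (0:ℝ) < K := by exact_mod_cast hK
  have tele : ∀ N : ℕ,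
      ∑ k ∈ Finset.range N, ⟪(2:ℝ)⁻¹ • (p k + p (k+1)), Matrix.toEuclideanLin A (q k)⟫ -
      ∑ k ∈ Finset.range N, ⟪p (k+1), Matrix.toEuclideanLin A ((2:ℝ)⁻¹ • (q k + q (k+1)))⟫ =
      (2:ℝ)⁻¹ * (⟪p 0, Matrix.toEuclideanLin A (q 0)⟫ -
          ⟪p N, Matrix.toEuclideanLin A (q N)⟫) := by
    intro N
    induction N with
    | zero => simp
    | succ N ih =>
      rw [Finset.sum_range_succ, Finset.sum_range_succ]
      simp only [map_smul, map_add, real_inner_smul_left, real_inner_smul_right,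
        inner_add_left, inner_add_right] at ih ⊢
      linarith
  set pb := (K:ℝ)⁻¹ • ∑ k ∈ Finset.range K, p (k+1) with hpb
  set qb := (K:ℝ)⁻¹ • ∑ k ∈ Finset.range K, q k with hqb
  have h1 : ∀ q', ∑ k ∈ Finset.range K, ⟪p (k+1), Matrix.toEuclideanLin A q'⟫ =
      K * ⟪pb, Matrix.toEuclideanLin A q'⟫ := by
    intro q'
    rw [hpb, real_inner_smul_left, sum_inner, mul_inv_cancel_left₀ hK0]
  have h2 : ∀ p', ∑ k ∈ Finset.range K, ⟪p', Matrix.toEuclideanLin A (q k)⟫ =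
      K * ⟪p', Matrix.toEuclideanLin A qb⟫ := by
    intro p'
    rw [hqb, map_smul, map_sum, real_inner_smul_right, inner_sum, mul_inv_cancel_left₀ hK0]
  have key : ∀ p' q', regret1 A p q K p' + regret2 A p q K q' =
      (2:ℝ)⁻¹ * (⟪p 0, Matrix.toEuclideanLin A (q 0)⟫ -
          ⟪p K, Matrix.toEuclideanLin A (q K)⟫) +
      K * (⟪pb, Matrix.toEuclideanLin A q'⟫ - ⟪p', Matrix.toEuclideanLin A qb⟫) := by
    intro p' q'
    have := tele K
    unfold regret1 regret2
    rw [h1, h2]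
    linarith
  have c1 : Continuous (fun q' => ⟪pb, Matrix.toEuclideanLin A q'⟫) :=
    continuous_const.inner (LinearMap.continuous_of_finiteDimensional _)
  have c2 : Continuous (fun p' => ⟪p', Matrix.toEuclideanLin A qb⟫) :=
    continuous_id.inner continuous_const
  obtain ⟨qs, hqs, hqmax⟩ := hQc.exists_isMaxOn hQne c1.continuousOn
  obtain ⟨ps, hps, hpmin⟩ := hPc.exists_isMinOn hPne c2.continuousOn
  have e1 : sSup ((fun q' => ⟪pb, Matrix.toEuclideanLin A q'⟫) '' Q) =
      ⟪pb, Matrix.toEuclideanLin A qs⟫ := by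
    apply IsGreatest.csSup_eq
    refine ⟨⟨qs, hqs, rfl⟩, ?_⟩
    rintro _ ⟨x, hx, rfl⟩
    exact hqmax hx
  have e2 : sInf ((fun p' => ⟪p', Matrix.toEuclideanLin A qb⟫) '' P) =
      ⟪ps, Matrix.toEuclideanLin A qb⟫ := by
    apply IsLeast.csInf_eq
    refine ⟨⟨ps, hps, rfl⟩, ?_⟩
    rintro _ ⟨x, hx, rfl⟩
    exact hpmin hx
  have e3 : totalRegret P Q A p q K = regret1 A p q K ps + regret2 A p q K qs := by
    apply IsGreatest.csSup_eq
    refine ⟨⟨ps, hps, qs, hqs, rfl⟩, ?_⟩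
    rintro _ ⟨x, hx, y, hy, rfl⟩
    rw [key, key]
    have a1 : ⟪pb, Matrix.toEuclideanLin A y⟫ ≤ ⟪pb, Matrix.toEuclideanLin A qs⟫ := hqmax hy
    have a2 : ⟪ps, Matrix.toEuclideanLin A qb⟫ ≤ ⟪x, Matrix.toEuclideanLin A qb⟫ := hpmin hx
    gcongr
  rw [e3, key]
  unfold dualityGap
  rw [e1, e2]
  field_simp
  ring
end

section
/- Let m = n, let A ∈ ℝ^{n×n} be invertible with smallest singular value α_min > 0, and let H : ℝ^{2n} → ℝ be differentiable and μ-strongly convex with respect to the ℓ₂-norm, with minimizer z* = argmin H. If (z_k) follows the forward method z_{k+1} = z_k − η J ∇H(z_k) with J = [[0, A],[−Aᵀ, 0]] and step size η > 0, then for all k ≥ 0: H(z_k) − H(z*) ≥ (1 + η² α_min² μ²)^k (H(z₀) − H(z*)). -/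
open RealInnerProductSpace Matrix

lemma J_inl {n : ℕ} (A : Matrix (Fin n) (Fin n) ℝ) (g : EuclideanSpace ℝ (Fin n ⊕ Fin n)) (i : Fin n) :
    Matrix.toEuclideanLin (Matrix.fromBlocks 0 A (-Aᵀ) 0) g (Sum.inl i) =
      (A *ᵥ fun j => g (Sum.inr j)) i := by
  simp [Matrix.toLpLin_apply, Matrix.mulVec, dotProduct, Fintype.sum_sum_type]

lemma J_inr {n : ℕ} (A : Matrix (Fin n) (Fin n) ℝ) (g : EuclideanSpace ℝ (Fin n ⊕ Fin n)) (i : Fin n) :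
    Matrix.toEuclideanLin (Matrix.fromBlocks 0 A (-Aᵀ) 0) g (Sum.inr i) =
      - (Aᵀ *ᵥ fun j => g (Sum.inl j)) i := by
  simp [Matrix.toLpLin_apply, Matrix.mulVec, dotProduct, Fintype.sum_sum_type]

lemma J_skew {n : ℕ} (A : Matrix (Fin n) (Fin n) ℝ) (g : EuclideanSpace ℝ (Fin n ⊕ Fin n)) :
    ⟪g, Matrix.toEuclideanLin (Matrix.fromBlocks 0 A (-Aᵀ) 0) g⟫ = 0 := by
  rw [PiLp.inner_apply, Fintype.sum_sum_type]
  simp only [J_inl, J_inr]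
  have h := Matrix.dotProduct_mulVec (fun j => g (Sum.inl j)) A (fun j => g (Sum.inr j))
  rw [← Matrix.mulVec_transpose] at h
  simp only [dotProduct] at h
  simp only [RCLike.inner_apply, conj_trivial, neg_mul, Finset.sum_neg_distrib]
  rw [← h, ← sub_eq_add_neg, sub_eq_zero]
  exact Finset.sum_congr rfl fun i _ => mul_comm _ _

lemma J_lower {n : ℕ} (A : Matrix (Fin n) (Fin n) ℝ) (α : ℝ) (hα : 0 < α)
    (hA : ∀ v : EuclideanSpace ℝ (Fin n), α * ‖v‖ ≤ ‖Matrix.toEuclideanLin A v‖)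
    (hAT : ∀ v : EuclideanSpace ℝ (Fin n), α * ‖v‖ ≤ ‖Matrix.toEuclideanLin Aᵀ v‖)
    (g : EuclideanSpace ℝ (Fin n ⊕ Fin n)) :
    α ^ 2 * ‖g‖ ^ 2 ≤ ‖Matrix.toEuclideanLin (Matrix.fromBlocks 0 A (-Aᵀ) 0) g‖ ^ 2 := by
  have h1 := pow_le_pow_left₀ (by positivity) (hA (WithLp.toLp 2 fun j => g (Sum.inr j))) 2
  have h2 := pow_le_pow_left₀ (by positivity) (hAT (WithLp.toLp 2 fun j => g (Sum.inl j))) 2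
  rw [mul_pow, EuclideanSpace.norm_sq_eq, EuclideanSpace.norm_sq_eq] at h1 h2
  rw [EuclideanSpace.norm_sq_eq, EuclideanSpace.norm_sq_eq, Fintype.sum_sum_type,
    Fintype.sum_sum_type]
  simp only [J_inl, J_inr, norm_neg]
  simp only [Matrix.toLpLin_apply] at h1 h2
  linarith

/-- **The forward method increases the energy exponentially fast for strongly convex `H`.**
If `A` is invertible with smallest singular value `α_min > 0` and `H` is `μ`-strongly convex,
then along `z_{k+1} = z_k − η J ∇H(z_k)` one has
`H(z_k) − H(z*) ≥ (1 + η² α_min² μ²)^k (H(z₀) − H(z*))`. -/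
theorem forward_method_energy_increase_strongly_convex {n : ℕ}
    (A : Matrix (Fin n) (Fin n) ℝ) (hAunit : IsUnit A)
    (αmin : ℝ) (hαmin : 0 < αmin)
    -- `αmin` is (a lower bound for) the smallest singular value of `A`
    (hA : ∀ v : EuclideanSpace ℝ (Fin n), αmin * ‖v‖ ≤ ‖Matrix.toEuclideanLin A v‖)
    (hAT : ∀ v : EuclideanSpace ℝ (Fin n), αmin * ‖v‖ ≤ ‖Matrix.toEuclideanLin Aᵀ v‖)
    (H : EuclideanSpace ℝ (Fin n ⊕ Fin n) → ℝ) (hH : Differentiable ℝ H)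
    (μ : ℝ) (hμ : 0 < μ)
    -- `H` is `μ`-strongly convex with respect to the `ℓ₂`-norm
    (hsc : ∀ w w', H w + ⟪gradient H w, w' - w⟫ + μ / 2 * ‖w' - w‖ ^ 2 ≤ H w')
    (zstar : EuclideanSpace ℝ (Fin n ⊕ Fin n)) (hmin : ∀ w, H zstar ≤ H w)
    (η : ℝ) (hη : 0 < η)
    (z : ℕ → EuclideanSpace ℝ (Fin n ⊕ Fin n))
    (hz : ∀ k, z (k+1) = z k -
      η • Matrix.toEuclideanLin (Matrix.fromBlocks 0 A (-Aᵀ) 0) (gradient H (z k))) :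
    ∀ k : ℕ, (1 + η ^ 2 * αmin ^ 2 * μ ^ 2) ^ k * (H (z 0) - H zstar) ≤ H (z k) - H zstar := by
  have step : ∀ k, (1 + η ^ 2 * αmin ^ 2 * μ ^ 2) * (H (z k) - H zstar) ≤
      H (z (k+1)) - H zstar := by
    intro k
    have h1 := hsc (z k) (z (k+1))
    have e : z (k+1) - z k = -(η • Matrix.toEuclideanLin (Matrix.fromBlocks 0 A (-Aᵀ) 0)
        (gradient H (z k))) := by rw [hz k]; abel
    rw [e, inner_neg_right, inner_smul_right, J_skew, norm_neg, norm_smul, mul_pow,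
      Real.norm_eq_abs, sq_abs] at h1
    have h2 := J_lower A αmin hαmin hA hAT (gradient H (z k))
    have h3 := hsc (z k) zstar
    have h4 := neg_le_of_abs_le (abs_real_inner_le_norm (gradient H (z k)) (zstar - z k))
    set G := ‖gradient H (z k)‖
    set d := ‖zstar - z k‖
    have h5 : 2 * μ * (H (z k) - H zstar) ≤ G ^ 2 := by
      have : H (z k) - H zstar ≤ G * d - μ / 2 * d ^ 2 := by linarith
      have := mul_le_mul_of_nonneg_left this (by positivity : 0 ≤ 2 * μ)
      nlinarith [sq_nonneg (G - μ * d)]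
    have h6 := mul_le_mul_of_nonneg_left h2 (by positivity : 0 ≤ μ / 2 * η ^ 2)
    have h7 := mul_le_mul_of_nonneg_left h5 (by positivity : 0 ≤ μ / 2 * η ^ 2 * αmin ^ 2)
    linarith
  intro k
  induction k with
  | zero => simp
  | succ k ih =>
    refine le_trans ?_ (step k)
    rw [pow_succ', mul_assoc]
    exact mul_le_mul_of_nonneg_left ih (by positivity)
end

section
/- Let H : ℝ^{m+n} → ℝ be convex, differentiable, and L₂-smooth with respect to the ℓ₂-norm (∇H is L₂-Lipschitz), with a minimizer z* = argmin H. Let α_max be the maximum singular value of A ∈ ℝ^{m×n} and J = [[0, A],[−Aᵀ, 0]]. If (z_k) follows the forward method z_{k+1} = z_k − η J ∇H(z_k) with step size η > 0, then for all k ≥ 0: H(z_k) − H(z*) ≤ (1 + η² α_max² L₂²)^k (H(z₀) − H(z*)). -/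
open RealInnerProductSpace Matrix

lemma aux_descent {E : Type*} [NormedAddCommGroup E] [InnerProductSpace ℝ E] [CompleteSpace E]
    (H : E → ℝ) (hH : Differentiable ℝ H) (L : ℝ)
    (hs : ∀ w w', ‖gradient H w - gradient H w'‖ ≤ L * ‖w - w'‖) (x v : E) :
    H (x + v) ≤ H x + inner ℝ (gradient H x) v + L / 2 * ‖v‖ ^ 2 := by
  have hd : ∀ t : ℝ, HasDerivAt (fun t : ℝ => H (x + t • v) - t * inner ℝ (gradient H x) v
      - L / 2 * t ^ 2 * ‖v‖ ^ 2)
      (inner ℝ (gradient H (x + t • v)) v - inner ℝ (gradient H x) v - L * t * ‖v‖ ^ 2) t := by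
    intro t
    have h1 : HasDerivAt (fun t : ℝ => x + t • v) v t := by
      simpa using ((hasDerivAt_id t).smul_const v).const_add x
    have h2 := ((hH (x + t • v)).hasGradientAt.hasFDerivAt).comp_hasDerivAt t h1
    have h3 := (hasDerivAt_id t).mul_const (inner ℝ (gradient H x) v)
    have h4 := (((hasDerivAt_id t).pow 2).const_mul (L / 2)).mul_const (‖v‖ ^ 2)
    have h5 := (h2.sub h3).sub h4
    refine h5.congr_deriv ?_
    simp only [InnerProductSpace.toDual_apply_apply, id]
    norm_num
    left
    ring
  have hanti : AntitoneOn (fun t : ℝ => H (x + t • v) - t * inner ℝ (gradient H x) v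
      - L / 2 * t ^ 2 * ‖v‖ ^ 2) (Set.Icc 0 1) := by
    apply antitoneOn_of_deriv_nonpos (convex_Icc 0 1)
    · exact fun t _ => (hd t).continuousAt.continuousWithinAt
    · exact fun t _ => (hd t).differentiableAt.differentiableWithinAt
    · intro t ht
      rw [interior_Icc] at ht
      rw [(hd t).deriv, ← inner_sub_left]
      have h1 := real_inner_le_norm (gradient H (x + t • v) - gradient H x) v
      have h2 := hs (x + t • v) x
      rw [add_sub_cancel_left, norm_smul, Real.norm_of_nonneg ht.1.le] at h2
      have h3 := mul_le_mul_of_nonneg_right h2 (norm_nonneg v)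
      nlinarith
  have := hanti (Set.left_mem_Icc.2 zero_le_one) (Set.right_mem_Icc.2 zero_le_one) zero_le_one
  simp only [one_smul, zero_smul, add_zero, one_mul, zero_mul, one_pow, mul_one] at this
  linarith

lemma aux_J {m n : ℕ} (A : Matrix (Fin m) (Fin n) ℝ) (α : ℝ)
    (hA : ∀ v : EuclideanSpace ℝ (Fin n), ‖Matrix.toEuclideanLin A v‖ ≤ α * ‖v‖)
    (hAT : ∀ v : EuclideanSpace ℝ (Fin m), ‖Matrix.toEuclideanLin Aᵀ v‖ ≤ α * ‖v‖)
    (g : EuclideanSpace ℝ (Fin m ⊕ Fin n)) :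
    inner ℝ g (Matrix.toEuclideanLin (Matrix.fromBlocks 0 A (-Aᵀ) 0) g) = 0 ∧
    ‖Matrix.toEuclideanLin (Matrix.fromBlocks 0 A (-Aᵀ) 0) g‖ ^ 2 ≤ α ^ 2 * ‖g‖ ^ 2 := by
  obtain ⟨g⟩ := g
  obtain ⟨a, b, rfl⟩ : ∃ a b, g = Sum.elim a b := ⟨g ∘ Sum.inl, g ∘ Sum.inr, by simp⟩
  have h1 := pow_le_pow_left₀ (norm_nonneg _) (hA (WithLp.toLp 2 b)) 2
  have h2 := pow_le_pow_left₀ (norm_nonneg _) (hAT (WithLp.toLp 2 a)) 2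
  rw [mul_pow, EuclideanSpace.norm_sq_eq, EuclideanSpace.norm_sq_eq] at h1 h2
  simp only [Matrix.toLpLin_toLp, Real.norm_eq_abs, sq_abs] at h1 h2
  constructor
  · have h : a ⬝ᵥ (A *ᵥ b) = b ⬝ᵥ (Aᵀ *ᵥ a) := by
      rw [Matrix.dotProduct_mulVec, Matrix.mulVec_transpose, dotProduct_comm]
    simp only [dotProduct] at h
    simp [Matrix.toLpLin_toLp, Matrix.fromBlocks_mulVec, PiLp.inner_apply, Matrix.neg_mulVec, mul_comm] at h ⊢
    linarith
  · rw [EuclideanSpace.norm_sq_eq, EuclideanSpace.norm_sq_eq]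
    simp [Matrix.toLpLin_toLp, Matrix.fromBlocks_mulVec, Matrix.neg_mulVec] at h1 h2 ⊢
    linarith

/-- **The forward method increases the energy at most exponentially fast for smooth convex `H`.**
If `H` is convex and `L₂`-smooth, then along `z_{k+1} = z_k − η J ∇H(z_k)` one has
`H(z_k) − H(z*) ≤ (1 + η² α_max² L₂²)^k (H(z₀) − H(z*))`. -/
theorem forward_method_energy_increase_smooth {m n : ℕ}
    (A : Matrix (Fin m) (Fin n) ℝ)
    (αmax : ℝ) (hαmax : 0 ≤ αmax)
    -- `αmax` is (an upper bound for) the maximum singular value of `A`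
    (hA : ∀ v : EuclideanSpace ℝ (Fin n), ‖Matrix.toEuclideanLin A v‖ ≤ αmax * ‖v‖)
    (hAT : ∀ v : EuclideanSpace ℝ (Fin m), ‖Matrix.toEuclideanLin Aᵀ v‖ ≤ αmax * ‖v‖)
    (H : EuclideanSpace ℝ (Fin m ⊕ Fin n) → ℝ)
    (hH : Differentiable ℝ H) (hconv : ConvexOn ℝ Set.univ H)
    (L₂ : ℝ)
    -- `H` is `L₂`-smooth with respect to the `ℓ₂`-norm
    (hsmooth : ∀ w w', ‖gradient H w - gradient H w'‖ ≤ L₂ * ‖w - w'‖)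
    (zstar : EuclideanSpace ℝ (Fin m ⊕ Fin n)) (hmin : ∀ w, H zstar ≤ H w)
    (η : ℝ) (hη : 0 < η)
    (z : ℕ → EuclideanSpace ℝ (Fin m ⊕ Fin n))
    (hz : ∀ k, z (k+1) = z k -
      η • Matrix.toEuclideanLin (Matrix.fromBlocks 0 A (-Aᵀ) 0) (gradient H (z k))) :
    ∀ k : ℕ, H (z k) - H zstar ≤ (1 + η ^ 2 * αmax ^ 2 * L₂ ^ 2) ^ k * (H (z 0) - H zstar) := by
  have hstep : ∀ k, H (z (k+1)) - H zstar ≤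
      (1 + η ^ 2 * αmax ^ 2 * L₂ ^ 2) * (H (z k) - H zstar) := by
    intro k
    obtain ⟨hJ1, hJ2⟩ := aux_J A αmax hA hAT (gradient H (z k))
    have hk := hz k
    set g := gradient H (z k) with hg
    set w := Matrix.toEuclideanLin (Matrix.fromBlocks 0 A (-Aᵀ) 0) g
    have hd := aux_descent H hH L₂ hsmooth (z k) (-(η • w))
    rw [← sub_eq_add_neg, ← hk, ← hg, inner_neg_right, inner_smul_right, hJ1, norm_neg, norm_smul,
      Real.norm_of_nonneg hη.le, mul_pow] at hd
    rcases lt_trichotomy L₂ 0 with hL | hL | hL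
    · have hall : ∀ u, u = zstar := by
        intro u
        have h1 := (norm_nonneg _).trans (hsmooth u zstar)
        have h2 : ‖u - zstar‖ ≤ 0 := by
          by_contra hc
          nlinarith
        exact sub_eq_zero.1 (norm_le_zero_iff.1 h2)
      rw [hall (z (k+1)), hall (z k)]
      simp
    · subst hL
      have := hmin (z k)
      simp at hd ⊢
      linarith
    · have hb := aux_descent H hH L₂ hsmooth (z k) (-(L₂⁻¹ • g))
      rw [← hg, inner_neg_right, inner_smul_right, real_inner_self_eq_norm_sq, norm_neg, norm_smul,
        Real.norm_of_nonneg (inv_pos.2 hL).le] at hb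
      have hm := hmin (z k + -(L₂⁻¹ • g))
      have e : L₂ / 2 * (L₂⁻¹ * ‖g‖) ^ 2 = L₂⁻¹ * ‖g‖ ^ 2 / 2 := by
        field_simp
      have hg2 : ‖g‖ ^ 2 ≤ 2 * L₂ * (H (z k) - H zstar) := by
        have h1 : L₂⁻¹ * ‖g‖ ^ 2 ≤ 2 * (H (z k) - H zstar) := by linarith
        have h2 := mul_le_mul_of_nonneg_left h1 hL.le
        rw [mul_inv_cancel_left₀ hL.ne'] at h2
        linarith
      have h3 : L₂ / 2 * (η ^ 2 * ‖w‖ ^ 2) ≤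
          L₂ / 2 * (η ^ 2 * (αmax ^ 2 * (2 * L₂ * (H (z k) - H zstar)))) := by
        gcongr
        exact hJ2.trans (by gcongr)
      linarith
  intro k
  induction k with
  | zero => simp
  | succ k ih =>
    refine (hstep k).trans ?_
    have hp : 0 ≤ 1 + η ^ 2 * αmax ^ 2 * L₂ ^ 2 := by positivity
    refine (mul_le_mul_of_nonneg_left ih hp).trans (le_of_eq ?_)
    ring
end

section
/- Let H : ℝ^{m+n} → ℝ be differentiable and L₂-smooth with respect to the ℓ₂-norm, let α_max be the maximum singular value of A ∈ ℝ^{m×n}, and let J = [[0, A],[−Aᵀ, 0]]. If 0 < η < 1/(α_max L₂), then the backward method is well defined: for every z ∈ ℝ^{m+n} there exists a unique z' ∈ ℝ^{m+n} satisfying z' = z − η J ∇H(z'). -/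
open RealInnerProductSpace Matrix

theorem skew_norm_le {m n : ℕ} (A : Matrix (Fin m) (Fin n) ℝ) (a : ℝ) (ha : 0 ≤ a)
    (hA : ∀ v : EuclideanSpace ℝ (Fin n), ‖Matrix.toEuclideanLin A v‖ ≤ a * ‖v‖)
    (hAT : ∀ v : EuclideanSpace ℝ (Fin m), ‖Matrix.toEuclideanLin Aᵀ v‖ ≤ a * ‖v‖)
    (v : EuclideanSpace ℝ (Fin m ⊕ Fin n)) :
    ‖Matrix.toEuclideanLin (Matrix.fromBlocks 0 A (-Aᵀ) 0) v‖ ≤ a * ‖v‖ := by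
  have h1 := hAT (WithLp.toLp 2 fun i => v (Sum.inl i))
  have h2 := hA (WithLp.toLp 2 fun i => v (Sum.inr i))
  have h1' := pow_le_pow_left₀ (norm_nonneg _) h1 2
  have h2' := pow_le_pow_left₀ (norm_nonneg _) h2 2
  refine (pow_le_pow_iff_left₀ (norm_nonneg _) (by positivity) two_ne_zero).1 ?_
  rw [mul_pow, EuclideanSpace.real_norm_sq_eq] at h1' h2' ⊢
  rw [EuclideanSpace.real_norm_sq_eq] at h1' h2' ⊢
  simp only [Fintype.sum_sum_type, Matrix.toLpLin_apply, Matrix.mulVec, dotProduct,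
    Matrix.fromBlocks_apply₁₁, Matrix.fromBlocks_apply₁₂, Matrix.fromBlocks_apply₂₁,
    Matrix.fromBlocks_apply₂₂, Matrix.zero_apply, Matrix.neg_apply, zero_mul, neg_mul,
    Finset.sum_const_zero, zero_add, add_zero, Finset.sum_neg_distrib, neg_sq] at h1' h2' ⊢
  linarith

/-- **Well-posedness of the backward discretization of the skew-gradient flow.**
If `H` is `L₂`-smooth and `0 < η < 1/(α_max L₂)`, then for every `z` there exists a unique `z'`
with `z' = z − η J ∇H(z')`, where `J = [[0, A], [−Aᵀ, 0]]`. -/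
theorem backward_method_well_defined {m n : ℕ}
    (A : Matrix (Fin m) (Fin n) ℝ)
    (αmax : ℝ) (hαmax : 0 ≤ αmax)
    -- `αmax` is (an upper bound for) the maximum singular value of `A`
    (hA : ∀ v : EuclideanSpace ℝ (Fin n), ‖Matrix.toEuclideanLin A v‖ ≤ αmax * ‖v‖)
    (hAT : ∀ v : EuclideanSpace ℝ (Fin m), ‖Matrix.toEuclideanLin Aᵀ v‖ ≤ αmax * ‖v‖)
    (H : EuclideanSpace ℝ (Fin m ⊕ Fin n) → ℝ) (hH : Differentiable ℝ H)
    (L₂ : ℝ)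
    -- `H` is `L₂`-smooth with respect to the `ℓ₂`-norm
    (hsmooth : ∀ w w', ‖gradient H w - gradient H w'‖ ≤ L₂ * ‖w - w'‖)
    (η : ℝ) (hη : 0 < η) (hηsmall : η * (αmax * L₂) < 1) :
    ∀ z : EuclideanSpace ℝ (Fin m ⊕ Fin n), ∃! z' : EuclideanSpace ℝ (Fin m ⊕ Fin n),
      z' = z - η • Matrix.toEuclideanLin (Matrix.fromBlocks 0 A (-Aᵀ) 0) (gradient H z') := by
  intro z
  set J := Matrix.toEuclideanLin (Matrix.fromBlocks 0 A (-Aᵀ) 0) with hJ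
  have hc : ContractingWith (Real.toNNReal (η * (αmax * L₂)))
      (fun w => z - η • J (gradient H w)) := by
    refine ⟨by simpa using hηsmall, LipschitzWith.of_dist_le_mul fun w w' => ?_⟩
    rw [dist_eq_norm, dist_eq_norm, sub_sub_sub_cancel_left, ← smul_sub, ← map_sub, norm_smul,
      Real.norm_of_nonneg hη.le]
    calc η * ‖J (gradient H w' - gradient H w)‖
        ≤ η * (αmax * (L₂ * ‖w' - w‖)) := by
          gcongr
          exact (skew_norm_le A αmax hαmax hA hAT _).trans (by gcongr; exact hsmooth _ _)
      _ = (η * (αmax * L₂)) * ‖w - w'‖ := by rw [norm_sub_rev]; ring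
      _ ≤ _ := by gcongr; exact Real.le_coe_toNNReal _
  exact ⟨hc.fixedPoint, hc.fixedPoint_isFixedPt.symm,
    fun y hy => hc.fixedPoint_unique (Eq.symm hy)⟩
end

section
/- Let H : ℝ^{m+n} → ℝ be convex and differentiable, A ∈ ℝ^{m×n}, and J = [[0, A],[−Aᵀ, 0]]. If the sequence (z_k) satisfies the backward method z_{k+1} = z_k − η J ∇H(z_{k+1}) with step size η > 0, then the energy is monotonically nonincreasing: H(z_{k+1}) ≤ H(z_k) for all k ≥ 0. -/
open RealInnerProductSpace Matrix

/-- **The backward discretization of the skew-gradient flow decreases a convex energy.**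
If `H` is convex and differentiable and `z_{k+1} = z_k − η J ∇H(z_{k+1})` with
`J = [[0, A], [−Aᵀ, 0]]`, then `H(z_{k+1}) ≤ H(z_k)` for all `k`. -/
theorem backward_method_energy_decrease {m n : ℕ} (A : Matrix (Fin m) (Fin n) ℝ)
    (H : EuclideanSpace ℝ (Fin m ⊕ Fin n) → ℝ)
    (hH : Differentiable ℝ H) (hconv : ConvexOn ℝ Set.univ H)
    (η : ℝ) (hη : 0 < η)
    (z : ℕ → EuclideanSpace ℝ (Fin m ⊕ Fin n))
    (hz : ∀ k, z (k+1) = z k -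
      η • Matrix.toEuclideanLin (Matrix.fromBlocks 0 A (-Aᵀ) 0) (gradient H (z (k+1)))) :
    ∀ k, H (z (k+1)) ≤ H (z k) := by
  intro k
  set x := z (k+1) with hx
  set g := gradient H x with hg
  set v := Matrix.toEuclideanLin (Matrix.fromBlocks 0 A (-Aᵀ) 0) g with hv
  have hzk : z k = x + η • v := by
    have := hz k
    rw [← hx, ← hg, ← hv] at this
    rw [this]; simp
  have hskew : inner ℝ g v = 0 := by
    have h1 : inner ℝ g v = (WithLp.ofLp g) ⬝ᵥ
        ((Matrix.fromBlocks 0 A (-Aᵀ) 0) *ᵥ (WithLp.ofLp g)) := by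
      rw [EuclideanSpace.inner_eq_star_dotProduct, hv, dotProduct_comm]
      simp [Matrix.toLpLin_apply]
    have h2 : ∀ u : Fin m ⊕ Fin n → ℝ,
        u ⬝ᵥ ((Matrix.fromBlocks 0 A (-Aᵀ) 0) *ᵥ u) = 0 := by
      intro u
      have ht : (Matrix.fromBlocks 0 A (-Aᵀ) 0)ᵀ = -(Matrix.fromBlocks 0 A (-Aᵀ) 0) := by
        simp [Matrix.fromBlocks_transpose, Matrix.fromBlocks_neg]
      have h3 : u ⬝ᵥ ((Matrix.fromBlocks 0 A (-Aᵀ) 0) *ᵥ u)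
          = -(u ⬝ᵥ ((Matrix.fromBlocks 0 A (-Aᵀ) 0) *ᵥ u)) := by
        conv_lhs => rw [Matrix.dotProduct_mulVec, ← Matrix.mulVec_transpose, ht,
          Matrix.neg_mulVec, neg_dotProduct, dotProduct_comm]
      linarith
    rw [h1, h2]
  have hd : HasDerivAt (fun t : ℝ => H (x + t • v)) 0 0 := by
    have hF : HasFDerivAt H (InnerProductSpace.toDual ℝ _ g) (x + (0:ℝ) • v) := by
      rw [zero_smul, add_zero]
      exact (hH x).hasGradientAt.hasFDerivAt
    have hl : HasDerivAt (fun t : ℝ => x + t • v) v 0 := by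
      simpa using ((hasDerivAt_id (0:ℝ)).smul_const v).const_add x
    have := hF.comp_hasDerivAt (0:ℝ) hl
    rw [InnerProductSpace.toDual_apply_apply, hskew] at this
    exact this
  have hc : ConvexOn ℝ Set.univ (fun t : ℝ => H (x + t • v)) := by
    refine ⟨convex_univ, fun s _ t _ a b ha hb hab => ?_⟩
    have h := hconv.2 (Set.mem_univ (x + s • v)) (Set.mem_univ (x + t • v)) ha hb hab
    have e : x + (a • s + b • t) • v = a • (x + s • v) + b • (x + t • v) := by
      have : x = (a + b) • x := by rw [hab, one_smul]
      nth_rewrite 1 [this]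
      simp only [smul_eq_mul]
      module
    simpa only [e] using h
  have h := hc.le_slope_of_hasDerivAt (Set.mem_univ 0) (Set.mem_univ η) hη hd
  rw [slope_def_field, sub_zero, le_div_iff₀ hη] at h
  rw [hzk]
  simp at h
  exact h
end

section
/- Let f : ℝ^m → ℝ be differentiable. If the Bregman divergence of f is symmetric, i.e. D_f(x', x) = D_f(x, x') for all x, x' ∈ ℝ^m (equivalently, the Bregman commutator C_f vanishes identically), then f is a quadratic function: there exist a linear map L : ℝ^m → ℝ^m, a vector b ∈ ℝ^m, and a constant c ∈ ℝ such that f(x) = (1/2)⟨x, L x⟩ + ⟨b, x⟩ + c for all x. -/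
open RealInnerProductSpace

/-- The Bregman divergence `D_f(x', x) = f(x') − f(x) − ⟨∇f(x), x' − x⟩`. -/
noncomputable def bregman {m : ℕ} (f : EuclideanSpace ℝ (Fin m) → ℝ)
    (x' x : EuclideanSpace ℝ (Fin m)) : ℝ :=
  f x' - f x - ⟪gradient f x, x' - x⟫

/-- **A vanishing Bregman commutator forces the function to be quadratic.**
If the Bregman divergence of a differentiable `f : ℝ^m → ℝ` is symmetric (equivalently, the
Bregman commutator vanishes identically), then `f` is a quadratic function:
`f(x) = (1/2)⟨x, L x⟩ + ⟨b, x⟩ + c` for a linear map `L`, a vector `b` and a constant `c`. -/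
theorem quadratic_of_symmetric_bregman {m : ℕ}
    (f : EuclideanSpace ℝ (Fin m) → ℝ) (hf : Differentiable ℝ f)
    (hsymm : ∀ x x' : EuclideanSpace ℝ (Fin m), bregman f x' x = bregman f x x') :
    ∃ (L : EuclideanSpace ℝ (Fin m) →ₗ[ℝ] EuclideanSpace ℝ (Fin m))
      (b : EuclideanSpace ℝ (Fin m)) (c : ℝ),
      ∀ x, f x = (1/2) * ⟪x, L x⟫ + ⟪b, x⟫ + c := by
  simp only [bregman] at hsymm
  generalize gradient f = g at hsymm
  have h0 : ∀ x, 2 * (f x - f 0) = ⟪g x, x⟫ + ⟪g 0, x⟫ := by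
    intro x
    have h := hsymm 0 x
    simp only [sub_zero, zero_sub, inner_neg_right] at h
    linarith
  have S : ∀ x y, ⟪g x - g 0, y⟫ = ⟪g y - g 0, x⟫ := by
    intro x y
    have h := hsymm x y
    have hx := h0 x
    have hy := h0 y
    simp only [inner_sub_right, inner_sub_left] at h ⊢
    linarith
  refine ⟨{ toFun := fun x => g x - g 0, map_add' := ?_, map_smul' := ?_ }, g 0, f 0, ?_⟩
  · intro x y
    refine ext_inner_right ℝ fun z => ?_
    rw [S, inner_add_right, inner_add_left, S z x, S z y]
  · intro r x
    refine ext_inner_right ℝ fun z => ?_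
    simp only [RingHom.id_apply]
    rw [S, inner_smul_right, real_inner_smul_left, S z x]
  · intro x
    have hx := h0 x
    simp only [LinearMap.coe_mk, AddHom.coe_mk]
    rw [real_inner_comm, inner_sub_left]
    linarith
end

section
/- Let ‖·‖ be a norm on ℝ^m and let f : ℝ^m → ℝ be three-times differentiable with ‖∇³f(x)‖_op ≤ M for all x (i.e., |∇³f(x)[v,v,v]| ≤ M ‖v‖³ for all x, v). Then the Bregman commutator satisfies |C_f(x', x)| ≤ (M/12) ‖x' − x‖³ for all x, x' ∈ ℝ^m. -/
lemma bcb_aux (h h' B B' : ℝ → ℝ) (hh : ∀ t, HasDerivAt h (h' t) t)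
    (hB : ∀ t, HasDerivAt B (B' t) t) (h0 : h 0 = 0) (B0 : B 0 = 0)
    (hb : ∀ t, 0 ≤ t → |h' t| ≤ B' t) : ∀ t, 0 ≤ t → |h t| ≤ B t := by
  intro t ht
  have := image_norm_le_of_norm_deriv_right_le_deriv_boundary (f := h) (f' := h') (a := 0) (b := t)
    (B := B) (B' := B') (fun s _ => (hh s).continuousAt.continuousWithinAt)
    (fun s _ => (hh s).hasDerivWithinAt) (by simp [h0, B0]) hB
    (fun s hs => by simpa using hb s hs.1) (x := t) ⟨ht, le_rfl⟩
  simpa using this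

lemma bcb_deriv {E : Type*} [NormedAddCommGroup E] [NormedSpace ℝ E]
    (f : E → ℝ) (hf : ContDiff ℝ 3 f) (x v : E) (k : ℕ) (hk : k < 3) (t : ℝ) :
    HasDerivAt (fun t : ℝ => iteratedFDeriv ℝ k f (x + t • v) (fun _ => v))
      (iteratedFDeriv ℝ (k+1) f (x + t • v) (fun _ => v)) t := by
  have hd : Differentiable ℝ (iteratedFDeriv ℝ k f) :=
    hf.differentiable_iteratedFDeriv (by exact_mod_cast hk)
  have hl : HasDerivAt (fun t : ℝ => x + t • v) v t := by
    simpa using ((hasDerivAt_id t).smul_const v).const_add x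
  have h1 := (hd (x + t • v)).hasFDerivAt.comp_hasDerivAt t hl
  have h2 := (ContinuousMultilinearMap.apply ℝ (fun _ : Fin k => E) ℝ
    (fun _ => v)).hasFDerivAt.comp_hasDerivAt t h1
  exact h2


/-- **Bound on the Bregman commutator under third-order smoothness.**
Let `f` be a three-times continuously differentiable real-valued function on a real normed
space with `|∇³f(x)[v,v,v]| ≤ M ‖v‖³` for all `x, v`. Then the Bregman commutator
`C_f(x', x) = f(x') − f(x) − (1/2)⟨∇f(x') + ∇f(x), x' − x⟩` satisfies
`|C_f(x', x)| ≤ (M/12) ‖x' − x‖³`. -/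
theorem bregman_commutator_bound {E : Type*} [NormedAddCommGroup E] [NormedSpace ℝ E]
    [FiniteDimensional ℝ E]
    (f : E → ℝ) (M : ℝ) (hf : ContDiff ℝ 3 f)
    (hM : ∀ (x v : E), |iteratedFDeriv ℝ 3 f x (fun _ => v)| ≤ M * ‖v‖ ^ 3) :
    ∀ x x' : E,
      |f x' - f x - (1/2) * (fderiv ℝ f x' (x' - x) + fderiv ℝ f x (x' - x))| ≤
        M / 12 * ‖x' - x‖ ^ 3 := by
  intro x x'
  set v := x' - x with hv
  set K := M * ‖v‖ ^ 3 with hK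
  set G : ℕ → ℝ → ℝ := fun k t => iteratedFDeriv ℝ k f (x + t • v) (fun _ => v) with hG
  have hD : ∀ k, k < 3 → ∀ t, HasDerivAt (G k) (G (k+1) t) t :=
    fun k hk t => bcb_deriv f hf x v k hk t
  have h3 : ∀ t, |G 3 t| ≤ K := fun t => hM _ _
  have hp1 := bcb_aux (fun t => G 1 t / 2 - G 1 0 / 2 - t / 2 * G 2 t) (fun t => - (t / 2) * G 3 t)
    (fun t => K * t ^ 2 / 4) (fun t => K * t / 2)
    (fun t => by
      have := (((hD 1 (by norm_num) t).div_const 2).sub_const (G 1 0 / 2)).sub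
        (((hasDerivAt_id t).div_const 2).mul (hD 2 (by norm_num) t))
      refine this.congr_deriv ?_
      simp only [id]
      ring)
    (fun t => by
      have := ((hasDerivAt_pow 2 t).const_mul K).div_const 4
      refine this.congr_deriv ?_
      simp; ring)
    (by simp) (by simp)
    (fun t ht => by
      rw [abs_mul, abs_neg, abs_of_nonneg (by positivity)]
      nlinarith [h3 t])
  have hp0 := bcb_aux (fun t => G 0 t - G 0 0 - t / 2 * (G 1 t + G 1 0))
    (fun t => G 1 t / 2 - G 1 0 / 2 - t / 2 * G 2 t)
    (fun t => K * t ^ 3 / 12) (fun t => K * t ^ 2 / 4)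
    (fun t => by
      have := ((hD 0 (by norm_num) t).sub_const (G 0 0)).sub
        (((hasDerivAt_id t).div_const 2).mul ((hD 1 (by norm_num) t).add_const (G 1 0)))
      refine this.congr_deriv ?_
      simp only [id]
      ring)
    (fun t => by
      have := ((hasDerivAt_pow 3 t).const_mul K).div_const 12
      refine this.congr_deriv ?_
      simp; ring)
    (by simp) (by simp) hp1 1 zero_le_one
  have e : x + (x' - x) = x' := by abel
  simp only [hG, hv, iteratedFDeriv_zero_apply, iteratedFDeriv_one_apply, one_smul, zero_smul,
    add_zero, e] at hp0
  calc _ ≤ _ := hp0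
    _ = _ := by rw [hK, hv]; ring
end

section
/- Let f : ℝ^m → ℝ and g : ℝ^n → ℝ be differentiable, A ∈ ℝ^{m×n}, η > 0, and let z_k = (x_k, y_k) evolve following the alternating method x_{k+1} = x_k − η A ∇g(y_k), y_{k+1} = y_k + η Aᵀ ∇f(x_{k+1}). Then for every k ≥ 0, the modified energy H_η(x,y) = f(x) + g(y) − (η/2)⟨∇f(x), A ∇g(y)⟩ changes by exactly the Bregman commutator: H_η(z_{k+1}) = H_η(z_k) + C_H(z_{k+1}, z_k), where C_H(z', z) = C_f(x', x) + C_g(y', y). -/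
open RealInnerProductSpace Matrix

/-- The Bregman commutator `C_f(x', x) = f(x') − f(x) − (1/2)⟨∇f(x') + ∇f(x), x' − x⟩`. -/
noncomputable def bregmanCommutator {m : ℕ} (f : EuclideanSpace ℝ (Fin m) → ℝ)
    (x' x : EuclideanSpace ℝ (Fin m)) : ℝ :=
  f x' - f x - (1/2) * ⟪gradient f x' + gradient f x, x' - x⟫

/-- The modified energy `H_η(x, y) = f(x) + g(y) − (η/2)⟨∇f(x), A ∇g(y)⟩`. -/
noncomputable def modifiedEnergy {m n : ℕ} (f : EuclideanSpace ℝ (Fin m) → ℝ)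
    (g : EuclideanSpace ℝ (Fin n) → ℝ) (A : Matrix (Fin m) (Fin n) ℝ) (η : ℝ)
    (x : EuclideanSpace ℝ (Fin m)) (y : EuclideanSpace ℝ (Fin n)) : ℝ :=
  f x + g y - η / 2 * ⟪gradient f x, Matrix.toEuclideanLin A (gradient g y)⟫

/-- **Change of the modified energy along the alternating method.**
Along `x_{k+1} = x_k − η A ∇g(y_k)`, `y_{k+1} = y_k + η Aᵀ ∇f(x_{k+1})`, the modified energy
changes by exactly the Bregman commutator:
`H_η(z_{k+1}) = H_η(z_k) + C_H(z_{k+1}, z_k)` with `C_H(z', z) = C_f(x', x) + C_g(y', y)`. -/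
theorem modifiedEnergy_change_alternating {m n : ℕ}
    (f : EuclideanSpace ℝ (Fin m) → ℝ) (g : EuclideanSpace ℝ (Fin n) → ℝ)
    (hf : Differentiable ℝ f) (hg : Differentiable ℝ g)
    (A : Matrix (Fin m) (Fin n) ℝ) (η : ℝ) (hη : 0 < η)
    (x : ℕ → EuclideanSpace ℝ (Fin m)) (y : ℕ → EuclideanSpace ℝ (Fin n))
    (hx : ∀ k, x (k+1) = x k - η • Matrix.toEuclideanLin A (gradient g (y k)))
    (hy : ∀ k, y (k+1) = y k + η • Matrix.toEuclideanLin Aᵀ (gradient f (x (k+1)))) :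
    ∀ k : ℕ, modifiedEnergy f g A η (x (k+1)) (y (k+1)) =
      modifiedEnergy f g A η (x k) (y k) +
        (bregmanCommutator f (x (k+1)) (x k) + bregmanCommutator g (y (k+1)) (y k)) := by
  intro k
  have adj : ∀ (u : EuclideanSpace ℝ (Fin m)) (v : EuclideanSpace ℝ (Fin n)),
      ⟪v, Matrix.toEuclideanLin Aᵀ u⟫ = ⟪u, Matrix.toEuclideanLin A v⟫ := by
    intro u v
    have h : Matrix.toEuclideanLin Aᵀ = LinearMap.adjoint (Matrix.toEuclideanLin A) := by
      rw [← Matrix.toEuclideanLin_conjTranspose_eq_adjoint, Matrix.conjTranspose_eq_transpose_of_trivial]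
    rw [h, LinearMap.adjoint_inner_right, real_inner_comm]
  have h1 : x (k+1) - x k = -(η • Matrix.toEuclideanLin A (gradient g (y k))) := by
    rw [hx k]; abel
  have h2 : y (k+1) - y k = η • Matrix.toEuclideanLin Aᵀ (gradient f (x (k+1))) := by
    rw [hy k]; abel
  unfold modifiedEnergy bregmanCommutator
  rw [h1, h2]
  simp only [inner_neg_right, inner_smul_right, inner_add_left, adj, map_add, inner_add_right]
  ring
end

section
/- Let f : ℝ^m → ℝ and g : ℝ^n → ℝ be quadratic functions (so that H(x,y) = f(x) + g(y) is quadratic), A ∈ ℝ^{m×n}, η > 0, and let z_k = (x_k, y_k) evolve following the alternating method x_{k+1} = x_k − η A ∇g(y_k), y_{k+1} = y_k + η Aᵀ ∇f(x_{k+1}). Then the modified energy H_η(x,y) = f(x) + g(y) − (η/2)⟨∇f(x), A ∇g(y)⟩ is exactly conserved: H_η(z_k) = H_η(z₀) for all k ≥ 0. -/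
open RealInnerProductSpace Matrix

/-- The trapezoidal rule is exact for quadratic functions. -/
theorem quad_diff {m : ℕ} (f : EuclideanSpace ℝ (Fin m) → ℝ)
    (L : EuclideanSpace ℝ (Fin m) →ₗ[ℝ] EuclideanSpace ℝ (Fin m))
    (b : EuclideanSpace ℝ (Fin m)) (c : ℝ)
    (hf : ∀ v, f v = (1/2) * inner ℝ v (L v) + inner ℝ b v + c)
    (u d : EuclideanSpace ℝ (Fin m)) :
    f (u + d) - f u = (1/2) * (inner ℝ (gradient f u) d + inner ℝ (gradient f (u + d)) d) := by
  have key : ∀ v w, inner ℝ (gradient f v) w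
      = (1/2) * (inner ℝ v (L w) + inner ℝ w (L v)) + inner ℝ b w := by
    intro v w
    have h1 : HasFDerivAt (fun v => L v) (LinearMap.toContinuousLinearMap L) v :=
      (LinearMap.toContinuousLinearMap L).hasFDerivAt
    have h2 := (((hasFDerivAt_id (𝕜 := ℝ) v).inner ℝ h1).const_mul (1/2 : ℝ)).add
      (((hasFDerivAt_const b v).inner ℝ (hasFDerivAt_id (𝕜 := ℝ) v)))
    have h3 := h2.add_const c
    have h4 : HasFDerivAt f _ v := h3.congr_of_eventuallyEq
      (Filter.Eventually.of_forall fun z => by simp [hf z])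
    unfold gradient
    rw [InnerProductSpace.toDual_symm_apply, h4.fderiv]
    simp
  rw [key, key, hf, hf]
  simp only [map_add, inner_add_left, inner_add_right]
  ring

/-- **Exact conservation of the modified energy for quadratic energies.**
If `f` and `g` are quadratic, then along the alternating method
`x_{k+1} = x_k − η A ∇g(y_k)`, `y_{k+1} = y_k + η Aᵀ ∇f(x_{k+1})`, the modified energy
`H_η(x, y) = f(x) + g(y) − (η/2)⟨∇f(x), A ∇g(y)⟩` is exactly conserved. -/
theorem modifiedEnergy_conserved_quadratic {m n : ℕ}
    (f : EuclideanSpace ℝ (Fin m) → ℝ) (g : EuclideanSpace ℝ (Fin n) → ℝ)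
    -- `f` and `g` are quadratic functions
    (Lf : EuclideanSpace ℝ (Fin m) →ₗ[ℝ] EuclideanSpace ℝ (Fin m))
    (bf : EuclideanSpace ℝ (Fin m)) (cf : ℝ)
    (hfq : ∀ v, f v = (1/2) * ⟪v, Lf v⟫ + ⟪bf, v⟫ + cf)
    (Lg : EuclideanSpace ℝ (Fin n) →ₗ[ℝ] EuclideanSpace ℝ (Fin n))
    (bg : EuclideanSpace ℝ (Fin n)) (cg : ℝ)
    (hgq : ∀ v, g v = (1/2) * ⟪v, Lg v⟫ + ⟪bg, v⟫ + cg)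
    (A : Matrix (Fin m) (Fin n) ℝ) (η : ℝ) (hη : 0 < η)
    (x : ℕ → EuclideanSpace ℝ (Fin m)) (y : ℕ → EuclideanSpace ℝ (Fin n))
    (hx : ∀ k, x (k+1) = x k - η • Matrix.toEuclideanLin A (gradient g (y k)))
    (hy : ∀ k, y (k+1) = y k + η • Matrix.toEuclideanLin Aᵀ (gradient f (x (k+1)))) :
    ∀ k : ℕ, modifiedEnergy f g A η (x k) (y k) = modifiedEnergy f g A η (x 0) (y 0) := by
  intro k
  induction k with
  | zero => rfl
  | succ k ih =>
    rw [← ih]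
    have h1 := quad_diff f Lf bf cf hfq (x k)
      (-(η • Matrix.toEuclideanLin A (gradient g (y k))))
    rw [← sub_eq_add_neg, ← hx] at h1
    have h2 := quad_diff g Lg bg cg hgq (y k)
      (η • Matrix.toEuclideanLin Aᵀ (gradient f (x (k+1))))
    rw [← hy] at h2
    have adj : ∀ u v, (inner ℝ u (Matrix.toEuclideanLin Aᵀ v) : ℝ)
        = inner ℝ v (Matrix.toEuclideanLin A u) := by
      intro u v
      have : Aᵀ = Aᴴ := by ext; simp
      rw [this, Matrix.toEuclideanLin_conjTranspose_eq_adjoint, LinearMap.adjoint_inner_right,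
        real_inner_comm]
    simp only [inner_neg_right, inner_smul_right, adj] at h1 h2
    unfold modifiedEnergy
    linarith
end

section
/- Let f : ℝ^m → ℝ and g : ℝ^n → ℝ be differentiable convex functions, A ∈ ℝ^{m×n}, and let X : ℝ → ℝ^m, Y : ℝ → ℝ^n satisfy the skew-gradient flow X'(t) = −A ∇g(Y(t)), Y'(t) = Aᵀ ∇f(X(t)). Set P(t) = ∇f(X(t)), Q(t) = ∇g(Y(t)), and for arbitrary x̂ ∈ ℝ^m, ŷ ∈ ℝ^n set p̂ = ∇f(x̂), q̂ = ∇g(ŷ). Assume there is 0 < M < ∞ with D_f(X(0), x̂) ≤ M and D_g(Y(0), ŷ) ≤ M. Then the continuous-time cumulative regret satisfies R_T(p̂, q̂) = ∫₀ᵀ P(t)ᵀ A q̂ dt − ∫₀ᵀ p̂ᵀ A Q(t) dt ≤ 2M for all T ≥ 0. -/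
open RealInnerProductSpace Matrix

theorem aux_convex {E : Type*} [NormedAddCommGroup E] [InnerProductSpace ℝ E] [CompleteSpace E]
    (f : E → ℝ) (hf : Differentiable ℝ f) (hc : ConvexOn ℝ Set.univ f) (x y : E) :
    0 ≤ f y - f x - ⟪gradient f x, y - x⟫ := by
  have hl : HasDerivAt (fun t : ℝ => x + t • (y - x)) (y - x) 0 := by
    simpa using ((hasDerivAt_id (0:ℝ)).smul_const (y - x)).const_add x
  have hg : HasFDerivAt f (InnerProductSpace.toDual ℝ E (gradient f x)) (x + (0:ℝ) • (y - x)) := by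
    simpa using (hf x).hasGradientAt.hasFDerivAt
  have hd : HasDerivAt (fun t : ℝ => f (x + t • (y - x))) ⟪gradient f x, y - x⟫ 0 := by
    exact hg.comp_hasDerivAt (0:ℝ) hl
  have hcc : ConvexOn ℝ Set.univ (fun t : ℝ => f (x + t • (y - x))) := by
    have h : ConvexOn ℝ Set.univ (f ∘ (AffineMap.lineMap x y : ℝ →ᵃ[ℝ] E)) :=
      hc.comp_affineMap (AffineMap.lineMap x y : ℝ →ᵃ[ℝ] E)
    have e : (fun t : ℝ => f (x + t • (y - x))) = f ∘ (AffineMap.lineMap x y : ℝ →ᵃ[ℝ] E) := by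
      funext t
      simp [AffineMap.lineMap_apply, add_comm]
    rw [e]
    exact h
  have := hcc.le_slope_of_hasDerivAt (Set.mem_univ 0) (Set.mem_univ 1) one_pos hd
  simp only [slope_def_field, one_smul, zero_smul, add_zero, add_sub_cancel, sub_zero, div_one] at this
  linarith

theorem aux_adj {m n : ℕ} (A : Matrix (Fin m) (Fin n) ℝ) (x : EuclideanSpace ℝ (Fin m))
    (y : EuclideanSpace ℝ (Fin n)) :
    ⟪x, Matrix.toEuclideanLin A y⟫ = ⟪y, Matrix.toEuclideanLin Aᵀ x⟫ := by
  have h := Matrix.toEuclideanLin_conjTranspose_eq_adjoint A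
  rw [Matrix.conjTranspose_eq_transpose_of_trivial] at h
  rw [h, LinearMap.adjoint_inner_right, real_inner_comm]

theorem aux_cont {E : Type*} [NormedAddCommGroup E] [InnerProductSpace ℝ E] [CompleteSpace E]
    (f : E → ℝ) (hf : ContDiff ℝ 1 f) : Continuous (gradient f) := by
  unfold gradient
  exact (InnerProductSpace.toDual ℝ E).symm.continuous.comp (hf.continuous_fderiv one_ne_zero)

/-- **Constant regret of the continuous-time method.**
If `(X, Y)` follows the skew-gradient flow `X' = −A ∇g(Y)`, `Y' = Aᵀ ∇f(X)` with convex
differentiable `f, g`, and the initial Bregman divergences to the reference dual points are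
bounded by `M`, then the continuous-time cumulative regret satisfies `R_T(p̂, q̂) ≤ 2M`
for all `T ≥ 0`. -/
theorem continuous_time_regret_bound {m n : ℕ}
    (f : EuclideanSpace ℝ (Fin m) → ℝ) (g : EuclideanSpace ℝ (Fin n) → ℝ)
    (hf : ContDiff ℝ 1 f) (hg : ContDiff ℝ 1 g)
    (hfc : ConvexOn ℝ Set.univ f) (hgc : ConvexOn ℝ Set.univ g)
    (A : Matrix (Fin m) (Fin n) ℝ)
    (X : ℝ → EuclideanSpace ℝ (Fin m)) (Y : ℝ → EuclideanSpace ℝ (Fin n))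
    (hX : ∀ t, HasDerivAt X (-(Matrix.toEuclideanLin A (gradient g (Y t)))) t)
    (hY : ∀ t, HasDerivAt Y (Matrix.toEuclideanLin Aᵀ (gradient f (X t))) t)
    (xh : EuclideanSpace ℝ (Fin m)) (yh : EuclideanSpace ℝ (Fin n))
    (M : ℝ) (hM : 0 < M)
    (hMf : f (X 0) - f xh - ⟪gradient f xh, X 0 - xh⟫ ≤ M)
    (hMg : g (Y 0) - g yh - ⟪gradient g yh, Y 0 - yh⟫ ≤ M) :
    ∀ T ≥ (0:ℝ),
      (∫ t in (0:ℝ)..T, ⟪gradient f (X t), Matrix.toEuclideanLin A (gradient g yh)⟫) -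
        (∫ t in (0:ℝ)..T, ⟪gradient f xh, Matrix.toEuclideanLin A (gradient g (Y t))⟫) ≤
      2 * M := by
  intro T _
  have hfd : Differentiable ℝ f := hf.differentiable one_ne_zero
  have hgd : Differentiable ℝ g := hg.differentiable one_ne_zero
  have hXc : Continuous X := continuous_iff_continuousAt.2 fun t => (hX t).continuousAt
  have hYc : Continuous Y := continuous_iff_continuousAt.2 fun t => (hY t).continuousAt
  have c1 : Continuous fun t => gradient f (X t) := (aux_cont f hf).comp hXc
  have c2 : Continuous fun t => Matrix.toEuclideanLin A (gradient g (Y t)) :=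
    (LinearMap.continuous_of_finiteDimensional _).comp ((aux_cont g hg).comp hYc)
  have i1 : (∫ t in (0:ℝ)..T, ⟪gradient f (X t), Matrix.toEuclideanLin A (gradient g yh)⟫)
      = ⟪gradient g yh, Y T⟫ - ⟪gradient g yh, Y 0⟫ := by
    apply intervalIntegral.integral_eq_sub_of_hasDerivAt (f := fun t => ⟪gradient g yh, Y t⟫)
    · intro t _
      rw [aux_adj]
      simpa using (hasDerivAt_const t (gradient g yh)).inner ℝ (hY t)
    · exact (c1.inner continuous_const).intervalIntegrable _ _
  have i2 : (∫ t in (0:ℝ)..T, ⟪gradient f xh, Matrix.toEuclideanLin A (gradient g (Y t))⟫)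
      = -⟪gradient f xh, X T⟫ - -⟪gradient f xh, X 0⟫ := by
    apply intervalIntegral.integral_eq_sub_of_hasDerivAt (f := fun t => -⟪gradient f xh, X t⟫)
    · intro t _
      refine ((hasDerivAt_const t (gradient f xh)).inner ℝ (hX t)).neg.congr_deriv ?_
      simp only [inner_neg_right, inner_zero_left, add_zero, neg_neg]
    · exact (continuous_const.inner c2).intervalIntegrable _ _
  have hE : ∀ t, HasDerivAt (fun t => f (X t) + g (Y t)) 0 t := by
    intro t
    have a := (hfd (X t)).hasGradientAt.hasFDerivAt.comp_hasDerivAt t (hX t)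
    have b := (hgd (Y t)).hasGradientAt.hasFDerivAt.comp_hasDerivAt t (hY t)
    have c := a.add b
    have e := aux_adj A (gradient f (X t)) (gradient g (Y t))
    refine c.congr_deriv ?_
    simp only [InnerProductSpace.toDual_apply_apply, inner_neg_right]
    linarith
  have hc := is_const_of_deriv_eq_zero (fun t => (hE t).differentiableAt)
    (fun t => (hE t).deriv) T 0
  have k1 := aux_convex f hfd hfc xh (X T)
  have k2 := aux_convex g hgd hgc yh (Y T)
  rw [i1, i2]
  rw [inner_sub_right] at k1 k2 hMf hMg
  linarith
end

section
/- Let f : ℝ^m → ℝ and g : ℝ^n → ℝ be differentiable convex functions and A ∈ ℝ^{m×n}. Let (x_k, y_k) satisfy the simultaneous backward method x_{k+1} = x_k − η A ∇g(y_{k+1}), y_{k+1} = y_k + η Aᵀ ∇f(x_{k+1}) with step size η > 0, and set p_k = ∇f(x_k), q_k = ∇g(y_k). For arbitrary x̂, ŷ set p̂ = ∇f(x̂), q̂ = ∇g(ŷ), and assume D_f(x₀, x̂) ≤ M, D_g(y₀, ŷ) ≤ M for some 0 < M < ∞. Then the cumulative regret R_K(p̂, q̂) = Σ_{k=0}^{K-1}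 p_{k+1}ᵀ A q̂ − Σ_{k=0}^{K-1} p̂ᵀ A q_{k+1} satisfies R_K(p̂, q̂) ≤ 2M/η for every K ≥ 1. -/
open RealInnerProductSpace Matrix

theorem bregman_nonneg_aux {m : ℕ} (f : EuclideanSpace ℝ (Fin m) → ℝ)
    (hf : Differentiable ℝ f) (hfc : ConvexOn ℝ Set.univ f)
    (x' x : EuclideanSpace ℝ (Fin m)) : 0 ≤ bregman f x' x := by
  have hc : ConvexOn ℝ Set.univ (f ∘ (AffineMap.lineMap x x' : ℝ →ᵃ[ℝ] _)) := by
    simpa using hfc.comp_affineMap (AffineMap.lineMap x x' : ℝ →ᵃ[ℝ] _)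
  have hl : HasDerivAt (AffineMap.lineMap x x' : ℝ →ᵃ[ℝ] _) (x' - x) (0 : ℝ) :=
    AffineMap.hasDerivAt_lineMap
  have hF : HasFDerivAt f (fderiv ℝ f x) ((AffineMap.lineMap x x' : ℝ →ᵃ[ℝ] _) (0 : ℝ)) := by
    simpa using (hf x).hasFDerivAt
  have h := hc.le_slope_of_hasDerivAt (Set.mem_univ 0) (Set.mem_univ 1) one_pos
    (hF.comp_hasDerivAt 0 hl)
  have e : ⟪gradient f x, x' - x⟫ = fderiv ℝ f x (x' - x) := by
    rw [← toDual_gradient, InnerProductSpace.toDual_apply_apply]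
  simp [slope_def_field] at h
  rw [bregman, e, map_sub]
  linarith

theorem inner_transpose_aux {m n : ℕ} (A : Matrix (Fin m) (Fin n) ℝ)
    (p : EuclideanSpace ℝ (Fin m)) (q : EuclideanSpace ℝ (Fin n)) :
    ⟪q, Matrix.toEuclideanLin Aᵀ p⟫ = ⟪p, Matrix.toEuclideanLin A q⟫ := by
  rw [← Matrix.conjTranspose_eq_transpose_of_trivial,
    Matrix.toEuclideanLin_conjTranspose_eq_adjoint, LinearMap.adjoint_inner_right,
    real_inner_comm]

/-- **Constant regret of the simultaneous backward method (proximal mirror descent).**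
Along the implicit update `x_{k+1} = x_k − η A ∇g(y_{k+1})`, `y_{k+1} = y_k + η Aᵀ ∇f(x_{k+1})`,
the cumulative regret with respect to `(p̂, q̂) = (∇f(x̂), ∇g(ŷ))` satisfies
`R_K(p̂, q̂) ≤ 2M/η` for every `K ≥ 1`. -/
theorem backward_method_regret_bound {m n : ℕ}
    (f : EuclideanSpace ℝ (Fin m) → ℝ) (g : EuclideanSpace ℝ (Fin n) → ℝ)
    (hf : Differentiable ℝ f) (hg : Differentiable ℝ g)
    (hfc : ConvexOn ℝ Set.univ f) (hgc : ConvexOn ℝ Set.univ g)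
    (A : Matrix (Fin m) (Fin n) ℝ)
    (η : ℝ) (hη : 0 < η)
    (x : ℕ → EuclideanSpace ℝ (Fin m)) (y : ℕ → EuclideanSpace ℝ (Fin n))
    (hx : ∀ k, x (k+1) = x k - η • Matrix.toEuclideanLin A (gradient g (y (k+1))))
    (hy : ∀ k, y (k+1) = y k + η • Matrix.toEuclideanLin Aᵀ (gradient f (x (k+1))))
    (xh : EuclideanSpace ℝ (Fin m)) (yh : EuclideanSpace ℝ (Fin n))
    (M : ℝ) (hM : 0 < M)
    (hMf : bregman f (x 0) xh ≤ M) (hMg : bregman g (y 0) yh ≤ M)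
    (K : ℕ) (hK : 1 ≤ K) :
    ∑ k ∈ Finset.range K, ⟪gradient f (x (k+1)), Matrix.toEuclideanLin A (gradient g yh)⟫ -
      ∑ k ∈ Finset.range K, ⟪gradient f xh, Matrix.toEuclideanLin A (gradient g (y (k+1)))⟫ ≤
    2 * M / η := by
  have key : ∀ N : ℕ, η * (∑ k ∈ Finset.range N,
        ⟪gradient f (x (k+1)), Matrix.toEuclideanLin A (gradient g yh)⟫ -
      ∑ k ∈ Finset.range N, ⟪gradient f xh, Matrix.toEuclideanLin A (gradient g (y (k+1)))⟫)
      + bregman f (x N) xh + bregman g (y N) yh ≤ bregman f (x 0) xh + bregman g (y 0) yh := by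
    intro N
    induction N with
    | zero => simp
    | succ N ih =>
      rw [Finset.sum_range_succ, Finset.sum_range_succ]
      have h1 := bregman_nonneg_aux f hf hfc (x N) (x (N+1))
      have h2 := bregman_nonneg_aux g hg hgc (y N) (y (N+1))
      have ex : x N = x (N+1) + η • Matrix.toEuclideanLin A (gradient g (y (N+1))) := by
        rw [hx N]; abel
      have ey : y N = y (N+1) - η • Matrix.toEuclideanLin Aᵀ (gradient f (x (N+1))) := by
        rw [hy N]; abel
      have d1 : ∀ p, ⟪p, x N⟫ = ⟪p, x (N+1)⟫
          + η * ⟪p, Matrix.toEuclideanLin A (gradient g (y (N+1)))⟫ := by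
        intro p
        conv_lhs => rw [ex]
        rw [inner_add_right, real_inner_smul_right]
      have d2 : ∀ q, ⟪q, y N⟫ = ⟪q, y (N+1)⟫
          - η * ⟪gradient f (x (N+1)), Matrix.toEuclideanLin A q⟫ := by
        intro q
        conv_lhs => rw [ey]
        rw [inner_sub_right, real_inner_smul_right, inner_transpose_aux]
      simp only [bregman, inner_sub_right, d1, d2] at h1 h2 ih ⊢
      linarith
  have h := key K
  have h1 := bregman_nonneg_aux f hf hfc (x K) xh
  have h2 := bregman_nonneg_aux g hg hgc (y K) yh
  rw [le_div_iff₀ hη]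
  linarith
end
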